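/- arXiv:quant-ph/0412063 — 2 statements merged into one kernel-verified Lean document; each statement's English description precedes it below -/
import Mathlib

section
/- For every density matrix ρ on ℂ² ⊗ ℂ²: Tr( ρ^{T₂} · (I₂ ⊗ σ₂) ρ (I₂ ⊗ σ₂) ) = ¼ (1 + a² − b² − c²). Consequently, if b² − a² + c² > 1 then the partial transpose ρ^{T₂} has a negative expectation value with the state (I₂ ⊗ σ₂) ρ (I₂ ⊗ σ₂) and hence is not positive semidefinite; in particular, the partial transpose of every entangled pure two-qubit state (for which a² = b² and c² > 1) fails to be positive semidefinite. -/
open scoped ComplexOrder Kronecker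

noncomputable section

/-- The standard inner product on `ℂ^ι`, conjugate-linear in the first argument. -/
def inn {ι : Type*} [Fintype ι] (x y : ι → ℂ) : ℂ :=
  ∑ i, (starRingEnd ℂ) (x i) * y i

/-- The tensor product of two vectors, with coordinates indexed by pairs. -/
def tens {m n : ℕ} (x : Fin m → ℂ) (y : Fin n → ℂ) : Fin m × Fin n → ℂ :=
  fun p => x p.1 * y p.2

/-- The outer product `|ψ⟩⟨ψ| = ψψ*`. -/
def outer {ι : Type*} (ψ : ι → ℂ) : Matrix ι ι ℂ :=
  Matrix.of fun i j => ψ i * (starRingEnd ℂ) (ψ j)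

/-- A density matrix: positive semidefinite with trace one. -/
def IsDensity {ι : Type*} [Fintype ι] (ρ : Matrix ι ι ℂ) : Prop :=
  ρ.PosSemidef ∧ ρ.trace = 1

/-- The partial transpose on the second tensor factor:
`(ρ^{T₂})_{(i,k),(j,l)} = ρ_{(i,l),(j,k)}`. -/
def ptranspose2 {m n : ℕ} (ρ : Matrix (Fin m × Fin n) (Fin m × Fin n) ℂ) :
    Matrix (Fin m × Fin n) (Fin m × Fin n) ℂ :=
  Matrix.of fun p q => ρ (p.1, q.2) (q.1, p.2)

/-- The three Pauli matrices `σ₁, σ₂, σ₃`. -/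
def pauli : Fin 3 → Matrix (Fin 2) (Fin 2) ℂ :=
  ![!![0, 1; 1, 0], !![0, -Complex.I; Complex.I, 0], !![1, 0; 0, -1]]

/-- `a² = Σᵢ Tr(ρ(σᵢ ⊗ I₂))²`, the squared length of the first Bloch component. -/
def aSq (ρ : Matrix (Fin 2 × Fin 2) (Fin 2 × Fin 2) ℂ) : ℝ :=
  ∑ i : Fin 3, ((ρ * (pauli i ⊗ₖ (1 : Matrix (Fin 2) (Fin 2) ℂ))).trace.re) ^ 2

/-- `b² = Σᵢ Tr(ρ(I₂ ⊗ σᵢ))²`, the squared length of the second Bloch component. -/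
def bSq (ρ : Matrix (Fin 2 × Fin 2) (Fin 2 × Fin 2) ℂ) : ℝ :=
  ∑ i : Fin 3, ((ρ * ((1 : Matrix (Fin 2) (Fin 2) ℂ) ⊗ₖ pauli i)).trace.re) ^ 2

/-- `c² = Σᵢⱼ Tr(ρ(σᵢ ⊗ σⱼ))²`, the squared length of the correlation component. -/
def cSq (ρ : Matrix (Fin 2 × Fin 2) (Fin 2 × Fin 2) ℂ) : ℝ :=
  ∑ i : Fin 3, ∑ j : Fin 3, ((ρ * (pauli i ⊗ₖ pauli j)).trace.re) ^ 2

/-!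
Conjugation by `σ₂` turns the transpose of a `2 × 2` matrix `X` into its adjugate `(tr X) I₂ - X`.
Applied to each block of `ρ^{T₂}`, this local spin flip gives
`(I ⊗ σ₂) ρ^{T₂} (I ⊗ σ₂) = ρ_A ⊗ I₂ - ρ`, where `ρ_A` is the partial trace over the second factor.
Hence the trace in question is the difference of purities `Tr ρ_A² - Tr ρ²`, which the Pauli
expansions `2 Tr ρ_A² = 1 + a²` and `4 Tr ρ² = 1 + a² + b² + c²` evaluate. It would be nonnegative
if `ρ^{T₂}` were positive semidefinite. On a pure state `ψψ*` it is minus the sum of the squared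
moduli of the `2 × 2` minors of the coefficient matrix of `ψ`, and these all vanish only if `ψ` is a
product vector.
-/

section Blocks

variable {m n R : Type*}

/-- The `(i, j)` block of a bipartite matrix regarded as an `m × m` matrix of `n × n` matrices, on
which operators of the form `I ⊗ B` and the partial operations on the second factor act
separately. -/
def block (ρ : Matrix (m × n) (m × n) R) (i j : m) : Matrix n n R :=
  ρ.submatrix (Prod.mk i) (Prod.mk j)

/-- The partial trace over the second tensor factor, which maps a bipartite state `ρ` to its
reduced state `ρ_A` on the first factor. -/
def ptrace2 [Fintype n] [AddCommMonoid R] (ρ : Matrix (m × n) (m × n) R) : Matrix m m R :=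
  Matrix.of fun i j => (block ρ i j).trace

theorem ext_block {ρ τ : Matrix (m × n) (m × n) R} (h : ∀ i j, block ρ i j = block τ i j) :
    ρ = τ := by
  ext ⟨i, k⟩ ⟨j, l⟩
  exact congrFun₂ (h i j) k l

variable [Fintype m] [Fintype n] [CommSemiring R]

theorem block_mul_one_kronecker [DecidableEq m] (ρ : Matrix (m × n) (m × n) R)
    (B : Matrix n n R) (i j : m) :
    block (ρ * ((1 : Matrix m m R) ⊗ₖ B)) i j = block ρ i j * B := by
  ext k l
  simp [block, Matrix.mul_apply, Fintype.sum_prod_type, Matrix.one_apply]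

theorem block_one_kronecker_mul [DecidableEq m] (B : Matrix n n R)
    (ρ : Matrix (m × n) (m × n) R) (i j : m) :
    block (((1 : Matrix m m R) ⊗ₖ B) * ρ) i j = B * block ρ i j := by
  ext k l
  simp [block, Matrix.mul_apply, Fintype.sum_prod_type, Matrix.one_apply]

theorem trace_mul_eq_sum_trace_block_mul (ρ τ : Matrix (m × n) (m × n) R) :
    (ρ * τ).trace = ∑ i, ∑ j, (block ρ i j * block τ j i).trace := by
  simp only [Matrix.trace, Matrix.diag_apply, Matrix.mul_apply, block, Matrix.submatrix_apply,
    Fintype.sum_prod_type]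
  exact Finset.sum_congr rfl fun i _ => Finset.sum_comm

theorem trace_ptrace2_mul_ptrace2 (ρ τ : Matrix (m × n) (m × n) R) :
    (ptrace2 ρ * ptrace2 τ).trace = ∑ i, ∑ j, (block ρ i j).trace * (block τ j i).trace :=
  rfl

theorem trace_ptrace2_mul [DecidableEq n] (ρ : Matrix (m × n) (m × n) R) (A : Matrix m m R) :
    (ptrace2 ρ * A).trace = (ρ * (A ⊗ₖ (1 : Matrix n n R))).trace := by
  have hblock (i j : m) : block (A ⊗ₖ (1 : Matrix n n R)) i j = A i j • 1 := rfl
  simp only [trace_mul_eq_sum_trace_block_mul, hblock, Matrix.mul_smul, Matrix.mul_one,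
    Matrix.trace_smul, smul_eq_mul, mul_comm (A _ _)]
  rfl

theorem trace_ptrace2 (ρ : Matrix (m × n) (m × n) R) : (ptrace2 ρ).trace = ρ.trace :=
  (Fintype.sum_prod_type fun p => ρ p p).symm

end Blocks

theorem isHermitian_kronecker {ι κ R : Type*} [CommSemiring R] [StarRing R] {A : Matrix ι ι R}
    {B : Matrix κ κ R} (hA : A.IsHermitian) (hB : B.IsHermitian) : (A ⊗ₖ B).IsHermitian := by
  rw [Matrix.IsHermitian, Matrix.conjTranspose_kronecker, hA.eq, hB.eq]

theorem pauli_isHermitian (i : Fin 3) : (pauli i).IsHermitian := by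
  ext a b
  fin_cases i <;> fin_cases a <;> fin_cases b <;> simp [pauli]

theorem isHermitian_one_kronecker_pauli (ι : Type*) [DecidableEq ι] (i : Fin 3) :
    ((1 : Matrix ι ι ℂ) ⊗ₖ pauli i).IsHermitian :=
  isHermitian_kronecker Matrix.isHermitian_one (pauli_isHermitian i)

section SpinFlip

theorem pauli_one_mul_transpose_mul_pauli_one (X : Matrix (Fin 2) (Fin 2) ℂ) :
    pauli 1 * X.transpose * pauli 1 = X.trace • 1 - X := by
  ext k l
  simp only [Matrix.mul_apply, Fin.sum_univ_two, Matrix.transpose_apply]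
  fin_cases k <;> fin_cases l <;>
    simp [pauli, Matrix.trace_fin_two, mul_right_comm _ _ Complex.I]

theorem spinFlip_ptranspose2 {m : ℕ} (ρ : Matrix (Fin m × Fin 2) (Fin m × Fin 2) ℂ) :
    ((1 : Matrix (Fin m) (Fin m) ℂ) ⊗ₖ pauli 1) * ptranspose2 ρ *
        ((1 : Matrix (Fin m) (Fin m) ℂ) ⊗ₖ pauli 1)
      = ptrace2 ρ ⊗ₖ (1 : Matrix (Fin 2) (Fin 2) ℂ) - ρ := by
  refine ext_block fun i j => ?_
  have hT : block (ptranspose2 ρ) i j = (block ρ i j).transpose := rfl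
  have hred : block (ptrace2 ρ ⊗ₖ (1 : Matrix (Fin 2) (Fin 2) ℂ) - ρ) i j
      = (block ρ i j).trace • 1 - block ρ i j := rfl
  rw [block_mul_one_kronecker, block_one_kronecker_mul, hT, hred,
    pauli_one_mul_transpose_mul_pauli_one]

theorem trace_ptranspose2_mul_spinFlip {m : ℕ}
    (ρ : Matrix (Fin m × Fin 2) (Fin m × Fin 2) ℂ) :
    (ptranspose2 ρ *
        (((1 : Matrix (Fin m) (Fin m) ℂ) ⊗ₖ pauli 1) * ρ *
          ((1 : Matrix (Fin m) (Fin m) ℂ) ⊗ₖ pauli 1))).trace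
      = (ptrace2 ρ * ptrace2 ρ).trace - (ρ * ρ).trace := by
  set S := (1 : Matrix (Fin m) (Fin m) ℂ) ⊗ₖ pauli 1 with hS
  calc (ptranspose2 ρ * (S * ρ * S)).trace
      = (ρ * (S * ptranspose2 ρ * S)).trace := by
        rw [← Matrix.mul_assoc, Matrix.trace_mul_comm, ← Matrix.mul_assoc, ← Matrix.mul_assoc,
          Matrix.trace_mul_comm]
    _ = (ptrace2 ρ * ptrace2 ρ).trace - (ρ * ρ).trace := by
        rw [hS, spinFlip_ptranspose2, Matrix.mul_sub, Matrix.trace_sub, trace_ptrace2_mul]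

open scoped MatrixOrder Matrix.Norms.L2Operator in
theorem trace_mul_nonneg_of_posSemidef {ι 𝕜 : Type*} [Fintype ι] [RCLike 𝕜] {A B : Matrix ι ι 𝕜}
    (hA : A.PosSemidef) (hB : B.PosSemidef) : 0 ≤ (A * B).trace := by
  classical
  obtain ⟨C, rfl⟩ := CStarAlgebra.nonneg_iff_eq_star_mul_self.mp hB.nonneg
  rw [← Matrix.mul_assoc, Matrix.trace_mul_comm, ← Matrix.mul_assoc]
  exact (hA.mul_mul_conjTranspose_same C).trace_nonneg

theorem trace_ptranspose2_mul_spinFlip_nonneg {m : ℕ}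
    {ρ : Matrix (Fin m × Fin 2) (Fin m × Fin 2) ℂ} (hρ : ρ.PosSemidef)
    (hT : (ptranspose2 ρ).PosSemidef) :
    0 ≤ (ptranspose2 ρ *
        (((1 : Matrix (Fin m) (Fin m) ℂ) ⊗ₖ pauli 1) * ρ *
          ((1 : Matrix (Fin m) (Fin m) ℂ) ⊗ₖ pauli 1))).trace := by
  have hflip := hρ.mul_mul_conjTranspose_same ((1 : Matrix (Fin m) (Fin m) ℂ) ⊗ₖ pauli 1)
  rw [(isHermitian_one_kronecker_pauli (Fin m) 1).eq] at hflip
  exact trace_mul_nonneg_of_posSemidef hT hflip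

end SpinFlip

section PauliExpansion

theorem two_mul_trace_mul_eq_sum_pauli (A B : Matrix (Fin 2) (Fin 2) ℂ) :
    2 * (A * B).trace
      = A.trace * B.trace + ∑ i, (A * pauli i).trace * (B * pauli i).trace := by
  simp only [pauli, Matrix.trace_fin_two, Matrix.mul_apply, Fin.sum_univ_two, Fin.sum_univ_three]
  simp only [Matrix.of_apply, Matrix.cons_val', Matrix.cons_val_fin_one, Matrix.cons_val,
    Matrix.cons_val_zero, Matrix.cons_val_one, mul_zero, mul_one, zero_add, add_zero, mul_neg]
  linear_combination -(A 0 1 - A 1 0) * (B 0 1 - B 1 0) * Complex.I_sq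

theorem two_mul_trace_mul_eq_sum_ptrace2_pauli {ι : Type*} [Fintype ι] [DecidableEq ι]
    (ρ τ : Matrix (ι × Fin 2) (ι × Fin 2) ℂ) :
    2 * (ρ * τ).trace
      = (ptrace2 ρ * ptrace2 τ).trace
        + ∑ j, (ptrace2 (ρ * ((1 : Matrix ι ι ℂ) ⊗ₖ pauli j)) *
            ptrace2 (τ * ((1 : Matrix ι ι ℂ) ⊗ₖ pauli j))).trace := by
  simp_rw [trace_mul_eq_sum_trace_block_mul, trace_ptrace2_mul_ptrace2, block_mul_one_kronecker,
    Finset.mul_sum, two_mul_trace_mul_eq_sum_pauli, Finset.sum_add_distrib]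
  congr 1
  exact (Finset.sum_congr rfl fun _ _ => Finset.sum_comm).trans Finset.sum_comm

theorem coe_re_trace_mul_of_isHermitian {ι : Type*} [Fintype ι] {A B : Matrix ι ι ℂ}
    (hA : A.IsHermitian) (hB : B.IsHermitian) : ((A * B).trace.re : ℂ) = (A * B).trace := by
  rw [← Complex.conj_eq_iff_re, starRingEnd_apply, ← Matrix.trace_conjTranspose,
    Matrix.conjTranspose_mul, hA.eq, hB.eq, Matrix.trace_mul_comm]

variable {ρ : Matrix (Fin 2 × Fin 2) (Fin 2 × Fin 2) ℂ}

theorem two_mul_trace_ptrace2_mul_self (hρ : ρ.IsHermitian) :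
    2 * (ptrace2 ρ * ptrace2 ρ).trace = ρ.trace ^ 2 + aSq ρ := by
  have hreal (i : Fin 3) := coe_re_trace_mul_of_isHermitian hρ
    (isHermitian_kronecker (pauli_isHermitian i) (Matrix.isHermitian_one (n := Fin 2)))
  rw [two_mul_trace_mul_eq_sum_pauli]
  simp only [trace_ptrace2, trace_ptrace2_mul, aSq, Complex.ofReal_sum, Complex.ofReal_pow, hreal,
    ← sq]

theorem two_mul_sum_trace_ptrace2_mul_pauli_mul_self (hρ : ρ.IsHermitian) :
    2 * ∑ j, (ptrace2 (ρ * ((1 : Matrix (Fin 2) (Fin 2) ℂ) ⊗ₖ pauli j)) *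
        ptrace2 (ρ * ((1 : Matrix (Fin 2) (Fin 2) ℂ) ⊗ₖ pauli j))).trace
      = bSq ρ + cSq ρ := by
  have hb (j : Fin 3) := coe_re_trace_mul_of_isHermitian hρ
    (isHermitian_one_kronecker_pauli (Fin 2) j)
  have hc (i j : Fin 3) := coe_re_trace_mul_of_isHermitian hρ
    (isHermitian_kronecker (pauli_isHermitian i) (pauli_isHermitian j))
  simp_rw [Finset.mul_sum, two_mul_trace_mul_eq_sum_pauli, Finset.sum_add_distrib]
  simp only [trace_ptrace2, trace_ptrace2_mul, Matrix.mul_assoc, ← Matrix.mul_kronecker_mul,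
    Matrix.one_mul, Matrix.mul_one, bSq, cSq, Complex.ofReal_sum, Complex.ofReal_pow, hb, hc, ← sq]
  rw [Finset.sum_comm]

theorem four_mul_trace_mul_self (hρ : ρ.IsHermitian) :
    4 * (ρ * ρ).trace = ρ.trace ^ 2 + aSq ρ + bSq ρ + cSq ρ := by
  linear_combination 2 * two_mul_trace_mul_eq_sum_ptrace2_pauli ρ ρ
    + two_mul_trace_ptrace2_mul_self hρ + two_mul_sum_trace_ptrace2_mul_pauli_mul_self hρ

theorem trace_ptranspose2_mul_spinFlip_eq_bloch (hρ : ρ.IsHermitian) :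
    (ptranspose2 ρ *
        (((1 : Matrix (Fin 2) (Fin 2) ℂ) ⊗ₖ pauli 1) * ρ *
          ((1 : Matrix (Fin 2) (Fin 2) ℂ) ⊗ₖ pauli 1))).trace
      = (((ρ.trace.re ^ 2 + aSq ρ - bSq ρ - cSq ρ) / 4 : ℝ) : ℂ) := by
  have hreal : (ρ.trace.re : ℂ) = ρ.trace := by
    simpa using coe_re_trace_mul_of_isHermitian hρ Matrix.isHermitian_one
  push_cast
  rw [hreal]
  linear_combination trace_ptranspose2_mul_spinFlip ρ + two_mul_trace_ptrace2_mul_self hρ / 2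
    - four_mul_trace_mul_self hρ / 4

end PauliExpansion

section PureState

theorem posSemidef_outer {ι : Type*} [Finite ι] (ψ : ι → ℂ) : (outer ψ).PosSemidef :=
  Matrix.posSemidef_vecMulVec_self_star ψ

theorem trace_ptranspose2_outer_mul_spinFlip {m : ℕ} (ψ : Fin m × Fin 2 → ℂ) :
    (ptranspose2 (outer ψ) *
        (((1 : Matrix (Fin m) (Fin m) ℂ) ⊗ₖ pauli 1) * outer ψ *
          ((1 : Matrix (Fin m) (Fin m) ℂ) ⊗ₖ pauli 1))).trace
      = ((-∑ i, ∑ j, Complex.normSq (ψ (i, 0) * ψ (j, 1) - ψ (i, 1) * ψ (j, 0)) : ℝ) : ℂ) := by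
  have hblock (i j : Fin m) (k l : Fin 2) :
      block (outer ψ) i j k l = ψ (i, k) * (starRingEnd ℂ) (ψ (j, l)) := rfl
  rw [trace_ptranspose2_mul_spinFlip]
  simp only [trace_ptrace2_mul_ptrace2, trace_mul_eq_sum_trace_block_mul, Matrix.trace_fin_two,
    Matrix.mul_apply, hblock, Fin.sum_univ_two, Complex.ofReal_neg, Complex.ofReal_sum,
    Complex.normSq_eq_conj_mul_self, map_sub, map_mul, ← Finset.sum_sub_distrib,
    ← Finset.sum_neg_distrib]
  refine Finset.sum_congr rfl fun i _ => Finset.sum_congr rfl fun j _ => ?_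
  ring

theorem exists_eq_tens_of_minors_eq_zero {m n : ℕ} (ψ : Fin m × Fin n → ℂ)
    (h : ∀ i j k l, ψ (i, k) * ψ (j, l) - ψ (i, l) * ψ (j, k) = 0) :
    ∃ (φ : Fin m → ℂ) (χ : Fin n → ℂ), ψ = tens φ χ := by
  by_cases hψ : ψ = 0
  · exact ⟨0, 0, by ext; simp [hψ, tens]⟩
  · obtain ⟨⟨i₀, k₀⟩, h₀⟩ := Function.ne_iff.mp hψ
    refine ⟨fun i => ψ (i, k₀), fun k => ψ (i₀, k) / ψ (i₀, k₀), ?_⟩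
    ext ⟨i, k⟩
    rw [tens, ← mul_div_assoc, eq_div_iff h₀]
    linear_combination h i i₀ k k₀

theorem not_posSemidef_ptranspose2_outer {m : ℕ} {ψ : Fin m × Fin 2 → ℂ}
    (hψ : ¬ ∃ (φ : Fin m → ℂ) (χ : Fin 2 → ℂ), ψ = tens φ χ) :
    ¬ (ptranspose2 (outer ψ)).PosSemidef := by
  intro hT
  have hnonneg := trace_ptranspose2_mul_spinFlip_nonneg (posSemidef_outer ψ) hT
  rw [trace_ptranspose2_outer_mul_spinFlip, Complex.zero_le_real, neg_nonneg] at hnonneg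
  have hsum := le_antisymm hnonneg
    (Finset.sum_nonneg fun i _ => Finset.sum_nonneg fun j _ => Complex.normSq_nonneg _)
  have hminor (i j : Fin m) : ψ (i, 0) * ψ (j, 1) - ψ (i, 1) * ψ (j, 0) = 0 := by
    simp only [Finset.sum_eq_zero_iff_of_nonneg, Finset.sum_nonneg, Complex.normSq_nonneg,
      implies_true, Finset.mem_univ, true_imp_iff, Complex.normSq_eq_zero] at hsum
    exact hsum i j
  refine hψ (exists_eq_tens_of_minors_eq_zero ψ fun i j k l => ?_)
  match k, l with
  | 0, 0 | 1, 1 => exact sub_self _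
  | 0, 1 => exact hminor i j
  | 1, 0 => linear_combination -hminor i j

end PureState

/-- `Tr(ρ^{T₂} (I₂⊗σ₂) ρ (I₂⊗σ₂)) = (1 + a² − b² − c²)/4`; so if `b² − a² + c² > 1`
then `ρ^{T₂}` is not positive semidefinite, and in particular the partial transpose of
every entangled pure two-qubit state fails to be positive semidefinite. -/
theorem stmt18 (ρ : Matrix (Fin 2 × Fin 2) (Fin 2 × Fin 2) ℂ) (hρ : IsDensity ρ) :
    (ptranspose2 ρ *
        (((1 : Matrix (Fin 2) (Fin 2) ℂ) ⊗ₖ pauli 1) * ρ *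
          ((1 : Matrix (Fin 2) (Fin 2) ℂ) ⊗ₖ pauli 1))).trace
      = (((1 + aSq ρ - bSq ρ - cSq ρ) / 4 : ℝ) : ℂ) ∧
    (1 < bSq ρ - aSq ρ + cSq ρ → ¬ (ptranspose2 ρ).PosSemidef) ∧
    (∀ ψ : Fin 2 × Fin 2 → ℂ, inn ψ ψ = 1 → ρ = outer ψ →
      (¬ ∃ (φ χ : Fin 2 → ℂ), ψ = tens φ χ) → ¬ (ptranspose2 ρ).PosSemidef) := by
  have htrace := trace_ptranspose2_mul_spinFlip_eq_bloch hρ.1.isHermitian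
  rw [hρ.2, Complex.one_re, one_pow] at htrace
  refine ⟨htrace, fun hlt hT => ?_, ?_⟩
  · have hnonneg := trace_ptranspose2_mul_spinFlip_nonneg hρ.1 hT
    rw [htrace, Complex.zero_le_real] at hnonneg
    linarith
  · rintro ψ - rfl hψ
    exact not_posSemidef_ptranspose2_outer hψ
end
end

section
/- If ρ is a separable density matrix on ℂ² ⊗ ℂ², then |c₁₁| + |c₂₂| + |c₃₃| ≤ 1 (the diagonal of the correlation matrix lies in the octahedron T ∩ −T). Conversely, for Bell-diagonal states this condition is also sufficient: a convex combination ρ of the four Bell-state projectors |φ⁺⟩⟨φ⁺|, |φ⁻⟩⟨φ⁻|, |ψ⁺⟩⟨ψ⁺|, |ψ⁻⟩⟨ψ⁻| is separable if and only if |c₁₁| + |c₂₂| + |c₃₃| ≤ 1. -/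
open scoped ComplexOrder Kronecker

noncomputable section

/-- The standard basis vector `|a⟩` of `ℂ²`. -/
def e (a : Fin 2) : Fin 2 → ℂ := fun b => if b = a then 1 else 0

/-- Tensor product of two qubit vectors, `|ab⟩`-style indexing by pairs. -/
def t2 (x y : Fin 2 → ℂ) : Fin 2 × Fin 2 → ℂ := fun p => x p.1 * y p.2

/-- The four Bell states `|φ⁺⟩, |φ⁻⟩, |ψ⁺⟩, |ψ⁻⟩`. -/
def bell : Fin 4 → (Fin 2 × Fin 2 → ℂ) :=
  ![(Real.sqrt 2 : ℂ)⁻¹ • (t2 (e 0) (e 0) + t2 (e 1) (e 1)),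
    (Real.sqrt 2 : ℂ)⁻¹ • (t2 (e 0) (e 0) - t2 (e 1) (e 1)),
    (Real.sqrt 2 : ℂ)⁻¹ • (t2 (e 0) (e 1) + t2 (e 1) (e 0)),
    (Real.sqrt 2 : ℂ)⁻¹ • (t2 (e 0) (e 1) - t2 (e 1) (e 0))]

/-- A separable state: a finite convex combination of tensor products of density
matrices; a non-separable density matrix is entangled. -/
def Separable {m n : ℕ} (ρ : Matrix (Fin m × Fin n) (Fin m × Fin n) ℂ) : Prop :=
  ∃ (k : ℕ) (lam : Fin k → ℝ) (ρ1 : Fin k → Matrix (Fin m) (Fin m) ℂ)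
    (ρ2 : Fin k → Matrix (Fin n) (Fin n) ℂ),
    (∀ i, 0 ≤ lam i) ∧ (∑ i, lam i = 1) ∧
    (∀ i, IsDensity (ρ1 i)) ∧ (∀ i, IsDensity (ρ2 i)) ∧
    ρ = ∑ i, (lam i : ℂ) • (ρ1 i ⊗ₖ ρ2 i)

/-- The correlation-matrix entry `c_{ij} = Tr(ρ(σᵢ ⊗ σⱼ))`. -/
def cEl (ρ : Matrix (Fin 2 × Fin 2) (Fin 2 × Fin 2) ℂ) (i j : Fin 3) : ℝ :=
  ((ρ * (pauli i ⊗ₖ pauli j)).trace).re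

/-!
Separable states form the convex hull of the product states, so both directions are convexity
arguments. A product state `A ⊗ B` has `c i i = r i * s i` for the Bloch vectors `r`, `s` of `A`
and `B`; these have Euclidean norm at most one, so Cauchy–Schwarz puts the diagonal of the
correlation matrix in the `ℓ¹` unit ball, which is convex. Conversely, a Bell-diagonal state is an
affine function of its correlation diagonal, and at the vertices `± eᵢ` of the octahedron this
function takes the values `(1 ± σᵢ ⊗ σᵢ) / 4`. Such a vertex is separable: it is the equal mixture
of two product states whose factors are normalized projections onto eigenspaces of `σᵢ`.
-/

section Convexity

variable {ι : Type*} [Fintype ι]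

theorem convex_setOf_sum_abs_le (r : ℝ) : Convex ℝ {c : ι → ℝ | ∑ i, |c i| ≤ r} := by
  intro c hc d hd a b ha hb hab
  calc ∑ i, |a * c i + b * d i|
      ≤ ∑ i, (a * |c i| + b * |d i|) := Finset.sum_le_sum fun i _ => by
        simpa only [abs_mul, abs_of_nonneg ha, abs_of_nonneg hb] using
          abs_add_le (a * c i) (b * d i)
    _ = a * ∑ i, |c i| + b * ∑ i, |d i| := by
        rw [Finset.sum_add_distrib, Finset.mul_sum, Finset.mul_sum]
    _ ≤ a * r + b * r := by gcongr <;> assumption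
    _ = r := by rw [← add_mul, hab, one_mul]

theorem add_sum_smul_mem_of_convex [Nonempty ι] {E : Type*} [AddCommGroup E] [Module ℝ E]
    {C : Set E} (hC : Convex ℝ C) {x : E} {v : ι → E} {t : ι → ℝ} (hadd : ∀ i, x + v i ∈ C)
    (hsub : ∀ i, x - v i ∈ C) (ht : ∑ i, |t i| ≤ 1) : x + ∑ i, t i • v i ∈ C := by
  have hx : x ∈ C := by
    obtain ⟨i⟩ := ‹Nonempty ι›
    simpa only [midpoint_add_sub] using hC.midpoint_mem (hadd i) (hsub i)
  let z (i : ι) : E := if 0 ≤ t i then x + v i else x - v i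
  have hz (i : ι) : z i ∈ C := by
    unfold z
    split_ifs
    exacts [hadd i, hsub i]
  have abs_smul_z (i : ι) : |t i| • z i = |t i| • x + t i • v i := by
    unfold z
    split_ifs with h
    · rw [abs_of_nonneg h, smul_add]
    · rw [abs_of_neg (not_le.mp h), smul_sub, neg_smul, neg_smul, sub_neg_eq_add]
  let weight (o : Option ι) : ℝ := o.elim (1 - ∑ i, |t i|) fun i => |t i|
  have hmem : ∑ o, weight o • o.elim x z ∈ C := by
    refine hC.sum_mem ?_ ?_ ?_
    · rintro (_ | i) - <;> simp [weight, ht]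
    · simp [weight, Fintype.sum_option]
    · rintro (_ | i) - <;> simp [hx, hz]
  convert hmem using 1
  simp only [weight, Fintype.sum_option, Option.elim, abs_smul_z, Finset.sum_add_distrib,
    ← Finset.sum_smul]
  module

theorem sum_abs_mul_le_one {f g : ι → ℝ} (hf : ∑ i, f i ^ 2 ≤ 1) (hg : ∑ i, g i ^ 2 ≤ 1) :
    ∑ i, |f i * g i| ≤ 1 := by
  have cauchy_schwarz : (∑ i, |f i * g i|) ^ 2 ≤ (∑ i, f i ^ 2) * ∑ i, g i ^ 2 := by
    simpa only [abs_mul, sq_abs] using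
      Finset.sum_mul_sq_le_sq_mul_sq Finset.univ (fun i => |f i|) (fun i => |g i|)
  have hnonneg : 0 ≤ ∑ i, |f i * g i| := Finset.sum_nonneg fun i _ => abs_nonneg _
  exact (sq_le_one_iff₀ hnonneg).mp (cauchy_schwarz.trans
    (mul_le_one₀ hf (Finset.sum_nonneg fun i _ => sq_nonneg _) hg))

end Convexity

/-- The product states on `ℂ^m ⊗ ℂ^n`, whose convex combinations are the separable states. -/
def productStates (m n : ℕ) : Set (Matrix (Fin m × Fin n) (Fin m × Fin n) ℂ) :=
  Set.image2 (· ⊗ₖ ·) {A | IsDensity A} {B | IsDensity B}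

theorem separable_iff_mem_convexHull {m n : ℕ} {ρ : Matrix (Fin m × Fin n) (Fin m × Fin n) ℂ} :
    Separable ρ ↔ ρ ∈ convexHull ℝ (productStates m n) := by
  constructor
  · rintro ⟨k, w, A, B, hw₀, hw₁, hA, hB, rfl⟩
    exact mem_convexHull_of_exists_fintype w (fun i => A i ⊗ₖ B i) hw₀ hw₁
      (fun i => Set.mem_image2_of_mem (hA i) (hB i)) (by simp only [Complex.coe_smul])
  · rw [mem_convexHull_iff_exists_fintype]
    rintro ⟨ι, _, w, z, hw₀, hw₁, hz, rfl⟩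
    choose A hA B hB hAB using hz
    let f := (Fintype.equivFin ι).symm
    refine ⟨Fintype.card ι, w ∘ f, A ∘ f, B ∘ f, fun i => hw₀ _, ?_, fun i => hA _,
      fun i => hB _, ?_⟩
    · rw [← hw₁]
      exact f.sum_comp w
    · simp only [Complex.coe_smul, Function.comp_apply, hAB]
      exact (f.sum_comp fun i => w i • z i).symm

theorem convex_setOf_separable (m n : ℕ) :
    Convex ℝ {ρ : Matrix (Fin m × Fin n) (Fin m × Fin n) ℂ | Separable ρ} := by
  simp only [separable_iff_mem_convexHull]
  exact convex_convexHull ℝ (productStates m n)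

theorem IsDensity.separable_kronecker {m n : ℕ} {A : Matrix (Fin m) (Fin m) ℂ}
    {B : Matrix (Fin n) (Fin n) ℂ} (hA : IsDensity A) (hB : IsDensity B) : Separable (A ⊗ₖ B) :=
  separable_iff_mem_convexHull.mpr (subset_convexHull ℝ _ (Set.mem_image2_of_mem hA hB))

section Reflection

open Matrix

theorem neg_kronecker {l m n p R : Type*} [Mul R] [HasDistribNeg R] (A : Matrix l m R)
    (B : Matrix n p R) : (-A) ⊗ₖ B = -(A ⊗ₖ B) := by
  ext ⟨_, _⟩ ⟨_, _⟩
  simp only [kronecker_apply, Matrix.neg_apply, neg_mul]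

theorem kronecker_neg {l m n p R : Type*} [Mul R] [HasDistribNeg R] (A : Matrix l m R)
    (B : Matrix n p R) : A ⊗ₖ (-B) = -(A ⊗ₖ B) := by
  ext ⟨_, _⟩ ⟨_, _⟩
  simp only [kronecker_apply, Matrix.neg_apply, mul_neg]

variable {ι : Type*} [Fintype ι] [DecidableEq ι]

/-- A traceless reflection: a Hermitian involution whose `±1`-eigenspaces have equal dimension.
It abstracts what makes `(1 ± σᵢ ⊗ σᵢ) / 4` separable for the Pauli matrices. -/
structure IsTracelessReflection (U : Matrix ι ι ℂ) : Prop where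
  isHermitian : U.IsHermitian
  mul_self : U * U = 1
  trace_eq_zero : U.trace = 0

namespace IsTracelessReflection

theorem neg {U : Matrix ι ι ℂ} (hU : IsTracelessReflection U) : IsTracelessReflection (-U) where
  isHermitian := hU.isHermitian.neg
  mul_self := by rw [neg_mul_neg, hU.mul_self]
  trace_eq_zero := by rw [trace_neg, hU.trace_eq_zero, neg_zero]

theorem posSemidef_one_add {U : Matrix ι ι ℂ} (hU : IsTracelessReflection U) :
    (1 + U).PosSemidef := by
  have hsq : 1 + U = (2⁻¹ : ℝ) • ((1 + U)ᴴ * (1 + U)) := by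
    rw [conjTranspose_add, conjTranspose_one, hU.isHermitian.eq, add_mul, mul_add, mul_add,
      hU.mul_self, one_mul, one_mul, mul_one]
    module
  rw [hsq]
  exact (posSemidef_conjTranspose_mul_self _).smul (by norm_num)

theorem isDensity_one_add [Nonempty ι] {U : Matrix ι ι ℂ} (hU : IsTracelessReflection U) :
    IsDensity ((Fintype.card ι : ℝ)⁻¹ • (1 + U)) := by
  refine ⟨hU.posSemidef_one_add.smul (by positivity), ?_⟩
  simp [trace_smul, trace_add, hU.trace_eq_zero]

theorem separable_one_add_kronecker {m n : ℕ} [NeZero m] [NeZero n] {U : Matrix (Fin m) (Fin m) ℂ}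
    {V : Matrix (Fin n) (Fin n) ℂ} (hU : IsTracelessReflection U) (hV : IsTracelessReflection V) :
    Separable ((m * n : ℝ)⁻¹ • (1 + U ⊗ₖ V)) := by
  have eigenspaces : (m * n : ℝ)⁻¹ • (1 + U ⊗ₖ V) = midpoint ℝ
      (((m : ℝ)⁻¹ • (1 + U)) ⊗ₖ ((n : ℝ)⁻¹ • (1 + V)))
      (((m : ℝ)⁻¹ • (1 + -U)) ⊗ₖ ((n : ℝ)⁻¹ • (1 + -V))) := by
    simp only [midpoint_eq_smul_add, invOf_eq_inv, smul_kronecker, kronecker_smul, add_kronecker,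
      kronecker_add, neg_kronecker, kronecker_neg, one_kronecker_one]
    module
  have isDensity {k : ℕ} [NeZero k] {W : Matrix (Fin k) (Fin k) ℂ} (hW : IsTracelessReflection W) :
      IsDensity ((k : ℝ)⁻¹ • (1 + W)) := by
    simpa only [Fintype.card_fin] using hW.isDensity_one_add
  rw [eigenspaces]
  exact (convex_setOf_separable m n).midpoint_mem
    ((isDensity hU).separable_kronecker (isDensity hV))
    ((isDensity hU.neg).separable_kronecker (isDensity hV.neg))

end IsTracelessReflection

end Reflection

section Pauli

open Matrix

theorem isTracelessReflection_pauli (i : Fin 3) : IsTracelessReflection (pauli i) where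
  isHermitian := by ext a b; fin_cases i <;> fin_cases a <;> fin_cases b <;> simp [pauli]
  mul_self := by fin_cases i <;> simp [pauli, one_fin_two]
  trace_eq_zero := by fin_cases i <;> simp [pauli, trace_fin_two]

theorem trace_pauli_mul_pauli (i j : Fin 3) :
    (pauli i * pauli j).trace = if i = j then 2 else 0 := by
  fin_cases i <;> fin_cases j <;> norm_num [pauli, trace_fin_two]

theorem sum_sq_trace_mul_pauli (A : Matrix (Fin 2) (Fin 2) ℂ) :
    ∑ i, (A * pauli i).trace ^ 2 = A.trace ^ 2 - 4 * A.det := by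
  simp only [pauli, trace_fin_two, mul_apply, Fin.isValue, Fin.sum_univ_two, Fin.sum_univ_three,
    cons_val_zero, of_apply, cons_val', cons_val_fin_one, mul_zero, cons_val_one, mul_one, zero_add,
    add_zero, mul_neg, cons_val, det_fin_two]
  linear_combination (A 0 1 - A 1 0) ^ 2 * Complex.I_sq

theorem trace_mul_im_eq_zero {ι : Type*} [Fintype ι] {A B : Matrix ι ι ℂ} (hA : A.IsHermitian)
    (hB : B.IsHermitian) : (A * B).trace.im = 0 := by
  rw [← Complex.conj_eq_iff_im, starRingEnd_apply, ← trace_conjTranspose, conjTranspose_mul,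
    hA.eq, hB.eq, trace_mul_comm]

/-- The Bloch vector `r` of a qubit state `A`, for which `A = (1 + ∑ i, r i • σᵢ) / 2`. -/
def blochVector (A : Matrix (Fin 2) (Fin 2) ℂ) (i : Fin 3) : ℝ := (A * pauli i).trace.re

theorem ofReal_blochVector {A : Matrix (Fin 2) (Fin 2) ℂ} (hA : A.IsHermitian) (i : Fin 3) :
    (blochVector A i : ℂ) = (A * pauli i).trace :=
  Complex.ext rfl (trace_mul_im_eq_zero hA (isTracelessReflection_pauli i).isHermitian).symm

theorem IsDensity.sum_sq_blochVector_le_one {A : Matrix (Fin 2) (Fin 2) ℂ} (hA : IsDensity A) :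
    ∑ i, blochVector A i ^ 2 ≤ 1 := by
  have hsum : ((∑ i, blochVector A i ^ 2 : ℝ) : ℂ) = 1 - 4 * A.det := by
    push_cast
    simp only [ofReal_blochVector hA.1.isHermitian, sum_sq_trace_mul_pauli, hA.2, one_pow]
  have hdet : 0 ≤ A.det := hA.1.det_nonneg
  rw [← Complex.real_le_real, hsum, Complex.ofReal_one]
  exact sub_le_self _ (mul_nonneg (by norm_num) hdet)

end Pauli

section Correlation

open Matrix

/-- The correlation `c i j` as a real-linear functional of the matrix. -/
def cElLinearMap (i j : Fin 3) : Matrix (Fin 2 × Fin 2) (Fin 2 × Fin 2) ℂ →ₗ[ℝ] ℝ where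
  toFun ρ := cEl ρ i j
  map_add' ρ σ := by simp [cEl, add_mul]
  map_smul' a ρ := by simp [cEl]

theorem cElLinearMap_apply (i j : Fin 3) (ρ : Matrix (Fin 2 × Fin 2) (Fin 2 × Fin 2) ℂ) :
    cElLinearMap i j ρ = cEl ρ i j := rfl

theorem cEl_kronecker (A B : Matrix (Fin 2) (Fin 2) ℂ) (i j : Fin 3) :
    cEl (A ⊗ₖ B) i j = ((A * pauli i).trace * (B * pauli j).trace).re := by
  rw [cEl, ← mul_kronecker_mul, trace_kronecker]

theorem cEl_kronecker_of_isHermitian {A : Matrix (Fin 2) (Fin 2) ℂ} (hA : A.IsHermitian)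
    (B : Matrix (Fin 2) (Fin 2) ℂ) (i j : Fin 3) :
    cEl (A ⊗ₖ B) i j = blochVector A i * blochVector B j := by
  rw [cEl_kronecker, ← ofReal_blochVector hA, Complex.re_ofReal_mul, blochVector, blochVector]

theorem Separable.sum_abs_cEl_le_one {ρ : Matrix (Fin 2 × Fin 2) (Fin 2 × Fin 2) ℂ}
    (hρ : Separable ρ) : ∑ i, |cEl ρ i i| ≤ 1 := by
  have hconvex : Convex ℝ {σ | ∑ i, |cEl σ i i| ≤ 1} :=
    (convex_setOf_sum_abs_le 1).linear_preimage (LinearMap.pi fun i => cElLinearMap i i)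
  refine convexHull_min ?_ hconvex (separable_iff_mem_convexHull.mp hρ)
  rintro _ ⟨A, hA, B, hB, rfl⟩
  simpa only [Set.mem_ofPred_eq, cEl_kronecker_of_isHermitian hA.1.isHermitian] using
    sum_abs_mul_le_one hA.sum_sq_blochVector_le_one hB.sum_sq_blochVector_le_one

end Correlation

section BellDiagonal

open Matrix

/-- The matrix with maximally mixed marginals and correlation matrix `diag t`. These are the affine
combinations of the Bell projectors; no positivity is imposed on `t`. -/
def bellDiagonal (t : Fin 3 → ℝ) : Matrix (Fin 2 × Fin 2) (Fin 2 × Fin 2) ℂ :=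
  (4⁻¹ : ℝ) • (1 + ∑ i, t i • (pauli i ⊗ₖ pauli i))

theorem cEl_bellDiagonal_self (t : Fin 3 → ℝ) (i : Fin 3) : cEl (bellDiagonal t) i i = t i := by
  have hone : cEl 1 i i = 0 := by
    rw [← one_kronecker_one, cEl_kronecker, one_mul, (isTracelessReflection_pauli i).trace_eq_zero,
      zero_mul, Complex.zero_re]
  have hpauli (j : Fin 3) : cEl (pauli j ⊗ₖ pauli j) i i = if j = i then 4 else 0 := by
    rw [cEl_kronecker, trace_pauli_mul_pauli]
    split_ifs <;> norm_num
  calc cEl (bellDiagonal t) i i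
      = 4⁻¹ * (cEl 1 i i + ∑ j, t j * cEl (pauli j ⊗ₖ pauli j) i i) := by
        simp only [← cElLinearMap_apply, bellDiagonal, map_smul, map_add, map_sum, smul_eq_mul]
    _ = 4⁻¹ * (t i * 4) := by simp [hone, hpauli]
    _ = t i := by ring

theorem separable_bellDiagonal {t : Fin 3 → ℝ} (ht : ∑ i, |t i| ≤ 1) :
    Separable (bellDiagonal t) := by
  have hvertex (i : Fin 3) {V : Matrix (Fin 2) (Fin 2) ℂ} (hV : IsTracelessReflection V) :
      Separable ((4⁻¹ : ℝ) • (1 : Matrix _ _ ℂ) + (4⁻¹ : ℝ) • (pauli i ⊗ₖ V)) := by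
    convert (isTracelessReflection_pauli i).separable_one_add_kronecker hV using 1
    rw [smul_add]
    norm_num
  have hadd (i : Fin 3) := hvertex i (isTracelessReflection_pauli i)
  have hsub (i : Fin 3) :
      Separable ((4⁻¹ : ℝ) • (1 : Matrix _ _ ℂ) - (4⁻¹ : ℝ) • (pauli i ⊗ₖ pauli i)) := by
    simpa only [kronecker_neg, smul_neg, ← sub_eq_add_neg] using
      hvertex i (isTracelessReflection_pauli i).neg
  have hoctahedron := add_sum_smul_mem_of_convex (convex_setOf_separable 2 2) hadd hsub ht
  simpa only [bellDiagonal, smul_add, Finset.smul_sum, smul_comm (4⁻¹ : ℝ) (t _),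
    Set.mem_ofPred_eq] using hoctahedron

theorem separable_bellDiagonal_iff (t : Fin 3 → ℝ) :
    Separable (bellDiagonal t) ↔ ∑ i, |t i| ≤ 1 := by
  refine ⟨fun h => ?_, separable_bellDiagonal⟩
  simpa only [cEl_bellDiagonal_self] using h.sum_abs_cEl_le_one

theorem sum_smul_bellDiagonal {ι : Type*} [Fintype ι] {w : ι → ℝ} (hw : ∑ k, w k = 1)
    (t : ι → Fin 3 → ℝ) :
    ∑ k, w k • bellDiagonal (t k) = bellDiagonal (∑ k, w k • t k) := by
  have hlin : ∑ k, w k • ∑ i, t k i • (pauli i ⊗ₖ pauli i) =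
      ∑ i, (∑ k, w k • t k) i • (pauli i ⊗ₖ pauli i) := by
    simp only [Finset.sum_apply, Pi.smul_apply, Finset.sum_smul, Finset.smul_sum, smul_assoc]
    exact Finset.sum_comm
  simp only [bellDiagonal, smul_comm (w _) (4⁻¹ : ℝ), ← Finset.smul_sum, smul_add,
    Finset.sum_add_distrib, hlin, ← Finset.sum_smul, hw, one_smul]

/-- The correlation diagonals of the Bell states, i.e. the vertices of the tetrahedron `T`. -/
def bellVertex : Fin 4 → Fin 3 → ℝ := ![![1, -1, 1], ![-1, 1, 1], ![1, 1, -1], ![-1, -1, -1]]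

theorem outer_bell (k : Fin 4) : outer (bell k) = bellDiagonal (bellVertex k) := by
  have hsqrt : (Real.sqrt 2 : ℂ)⁻¹ * (Real.sqrt 2 : ℂ)⁻¹ = 2⁻¹ := by
    rw [← mul_inv, ← Complex.ofReal_mul, Real.mul_self_sqrt zero_le_two, Complex.ofReal_ofNat]
  ext ⟨p, q⟩ ⟨p', q'⟩
  simp only [outer, of_apply, bellDiagonal, Fin.sum_univ_three, ← one_kronecker_one,
    Matrix.smul_apply, Matrix.add_apply, kronecker_apply]
  fin_cases k <;> fin_cases p <;> fin_cases q <;> fin_cases p' <;> fin_cases q' <;>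
    simp [bell, t2, e, bellVertex, pauli, hsqrt] <;> norm_num

theorem sum_smul_outer_bell {w : Fin 4 → ℝ} (hw : ∑ k, w k = 1) :
    ∑ k, (w k : ℂ) • outer (bell k) = bellDiagonal (∑ k, w k • bellVertex k) := by
  simp only [Complex.coe_smul, outer_bell, sum_smul_bellDiagonal hw]

end BellDiagonal

/-- Every separable two-qubit state satisfies `|c₁₁| + |c₂₂| + |c₃₃| ≤ 1` (its
correlation diagonal lies in the octahedron `T ∩ −T`); for Bell-diagonal states this
condition is also sufficient for separability. -/
theorem stmt19 (ρ : Matrix (Fin 2 × Fin 2) (Fin 2 × Fin 2) ℂ) (hρ : IsDensity ρ) :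
    (Separable ρ → |cEl ρ 0 0| + |cEl ρ 1 1| + |cEl ρ 2 2| ≤ 1) ∧
    ((∃ w : Fin 4 → ℝ, (∀ i, 0 ≤ w i) ∧ (∑ i, w i = 1) ∧
        ρ = ∑ i, (w i : ℂ) • outer (bell i)) →
      (Separable ρ ↔ |cEl ρ 0 0| + |cEl ρ 1 1| + |cEl ρ 2 2| ≤ 1)) := by
  simp only [← Fin.sum_univ_three fun i => |cEl ρ i i|]
  refine ⟨Separable.sum_abs_cEl_le_one, ?_⟩
  rintro ⟨w, -, hw, rfl⟩
  simp only [sum_smul_outer_bell hw, cEl_bellDiagonal_self]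
  exact separable_bellDiagonal_iff _
end
end
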